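/- Let J: ℝⁿ → ℝ and g: ℝⁿ × [0,1] → ℝᵐ be continuously differentiable, a ∈ ℝⁿ, and let ρ_a be the associated homotopy map. Suppose (λ_k, u_k, μ_k) is a sequence in [0,1] × ℝⁿ × ℝᵐ with ρ_a(λ_k, u_k, μ_k) = 0 for all k, λ_k → 1, u_k → u* and μ_k → μ* as k → ∞. Then (u*, μ*) is a KKT pair for the original problem: ∇ᵤJ(u*) + Σᵢ μ*ᵢ ∇ᵤgᵢ(u*, 1) = 0, gᵢ(u*, 1) ≤ 0, μ*ᵢ ≥ 0, and μ*ᵢ·gᵢ(u*, 1) = 0 for every i; i.e., any accumulation point of the zero curve as the homotopy parameter tends to 1 solves the first-order necessary conditions of the original (λ = 1) problem. -/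

import Mathlib

/-- The cubic complementarity function `φ(a,b) = |a - b|³ - a³ - b³`. -/
noncomputable def cubicPhi (a b : ℝ) : ℝ := |a - b| ^ 3 - a ^ 3 - b ^ 3

/-- The homotopy map
`ρ_a(λ, u, μ) = (λ(∇ᵤJ(u) + ∇ᵤg(u,λ)ᵀμ) + (1-λ)(u - a), (φ(μᵢ, -gᵢ(u,λ)))ᵢ)`. -/
noncomputable def homotopyMap {n m : ℕ}
    (J : EuclideanSpace ℝ (Fin n) → ℝ)
    (g : EuclideanSpace ℝ (Fin n) → ℝ → Fin m → ℝ)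
    (a : EuclideanSpace ℝ (Fin n))
    (lam : ℝ) (u : EuclideanSpace ℝ (Fin n)) (μ : Fin m → ℝ) :
    EuclideanSpace ℝ (Fin n) × (Fin m → ℝ) :=
  (lam • (gradient J u + ∑ i, μ i • gradient (fun v => g v lam i) u)
      + (1 - lam) • (u - a),
   fun i => cubicPhi (μ i) (-(g u lam i)))

/-!
The homotopy map is jointly continuous in `(λ, u, μ)`, so its zero set is closed and every
accumulation point with `λ = 1` is itself a zero. At `λ = 1` the term in `u - a` disappears and
the first component is the gradient of the Lagrangian, while the zeros of `φ` are exactly the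
complementary pairs of nonnegative numbers: the zeros at `λ = 1` are the KKT pairs.
-/

section CubicPhi

variable {a b : ℝ}

theorem continuous_cubicPhi : Continuous fun p : ℝ × ℝ => cubicPhi p.1 p.2 := by
  unfold cubicPhi
  fun_prop

theorem cubicPhi_comm (a b : ℝ) : cubicPhi a b = cubicPhi b a := by
  rw [cubicPhi, cubicPhi, abs_sub_comm, sub_right_comm]

theorem cubicPhi_of_le (hba : b ≤ a) :
    cubicPhi a b = -b * (3 * (a - b / 2) ^ 2 + 5 / 4 * b ^ 2) := by
  rw [cubicPhi, abs_of_nonneg (sub_nonneg.2 hba)]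
  ring

theorem cubicPhi_eq_zero_iff_of_le (hba : b ≤ a) : cubicPhi a b = 0 ↔ b = 0 := by
  refine ⟨fun h => ?_, fun hb => by rw [cubicPhi_of_le hba, hb, neg_zero, zero_mul]⟩
  by_contra hb
  have hquad : 0 < 3 * (a - b / 2) ^ 2 + 5 / 4 * b ^ 2 := by positivity
  rw [cubicPhi_of_le hba] at h
  exact mul_ne_zero (neg_ne_zero.2 hb) hquad.ne' h

theorem cubicPhi_eq_zero_iff : cubicPhi a b = 0 ↔ 0 ≤ a ∧ 0 ≤ b ∧ a * b = 0 := by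
  wlog hba : b ≤ a generalizing a b
  · rw [cubicPhi_comm, this (le_of_not_ge hba), mul_comm, and_left_comm]
  rw [cubicPhi_eq_zero_iff_of_le hba]
  constructor
  · rintro rfl
    exact ⟨hba, le_rfl, mul_zero a⟩
  · rintro ⟨-, hb, hab⟩
    have hsq : b * b ≤ 0 := (mul_le_mul_of_nonneg_right hba hb).trans_eq hab
    exact mul_self_eq_zero.1 (hsq.antisymm (mul_self_nonneg b))

end CubicPhi

section Gradient

variable {𝕜 F P : Type*} [RCLike 𝕜] [NormedAddCommGroup F] [InnerProductSpace 𝕜 F]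
  [CompleteSpace F]

theorem continuous_gradient {f : F → 𝕜} (hf : ContDiff 𝕜 1 f) : Continuous (gradient f) :=
  (InnerProductSpace.toDual 𝕜 F).symm.continuous.comp (hf.continuous_fderiv one_ne_zero)

theorem continuous_partial_gradient [NormedAddCommGroup P] [NormedSpace 𝕜 P] {f : F → P → 𝕜}
    (hf : ContDiff 𝕜 1 fun q : F × P => f q.1 q.2) :
    Continuous fun q : F × P => gradient (fun v => f v q.2) q.1 := by
  have hf' : ContDiff 𝕜 1 (Function.uncurry fun (q : F × P) v => f v q.2) :=
    hf.comp (contDiff_snd.prodMk contDiff_fst.snd)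
  exact (InnerProductSpace.toDual 𝕜 F).symm.continuous.comp
    (Continuous.fderiv_one hf' continuous_fst)

end Gradient

/-- `(x, μ)` is a Karush–Kuhn–Tucker pair for minimizing `f` subject to `h ≤ 0`. Differentiability
of `f` and `h` is left to the context: `gradient` is `0` where it fails. -/
structure IsKKTPair {F ι : Type*} [NormedAddCommGroup F] [InnerProductSpace ℝ F]
    [CompleteSpace F] [Fintype ι] (f : F → ℝ) (h : F → ι → ℝ) (x : F) (μ : ι → ℝ) : Prop where
  stationary : gradient f x + ∑ i, μ i • gradient (fun v => h v i) x = 0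
  feasible : ∀ i, h x i ≤ 0
  multiplier_nonneg : ∀ i, 0 ≤ μ i
  complementary : ∀ i, μ i * h x i = 0

section HomotopyMap

variable {n m : ℕ} {J : EuclideanSpace ℝ (Fin n) → ℝ}
  {g : EuclideanSpace ℝ (Fin n) → ℝ → Fin m → ℝ} {a u : EuclideanSpace ℝ (Fin n)}
  {μ : Fin m → ℝ}

theorem homotopyMap_one_eq_zero_iff :
    homotopyMap J g a 1 u μ = 0 ↔ IsKKTPair J (fun v => g v 1) u μ := by
  have hφ (i : Fin m) : cubicPhi (μ i) (-g u 1 i) = 0 ↔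
      0 ≤ μ i ∧ g u 1 i ≤ 0 ∧ μ i * g u 1 i = 0 := by
    rw [cubicPhi_eq_zero_iff, neg_nonneg, mul_neg, neg_eq_zero]
  simp only [homotopyMap, one_smul, sub_self, zero_smul, add_zero, Prod.mk_eq_zero, funext_iff,
    Pi.zero_apply, hφ, forall_and]
  exact ⟨fun ⟨hstat, hμ, hfeas, hcompl⟩ => ⟨hstat, hfeas, hμ, hcompl⟩,
    fun ⟨hstat, hfeas, hμ, hcompl⟩ => ⟨hstat, hμ, hfeas, hcompl⟩⟩

theorem continuous_homotopyMap (hJ : ContDiff ℝ 1 J)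
    (hg : ∀ i, ContDiff ℝ 1 (fun q : EuclideanSpace ℝ (Fin n) × ℝ => g q.1 q.2 i)) :
    Continuous fun p : ℝ × EuclideanSpace ℝ (Fin n) × (Fin m → ℝ) =>
      homotopyMap J g a p.1 p.2.1 p.2.2 := by
  have hproj : Continuous fun p : ℝ × EuclideanSpace ℝ (Fin n) × (Fin m → ℝ) => (p.2.1, p.1) := by
    fun_prop
  have hgradJ : Continuous (gradient J) := continuous_gradient hJ
  have hgradg (i : Fin m) : Continuous fun p : ℝ × EuclideanSpace ℝ (Fin n) × (Fin m → ℝ) =>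
      gradient (fun v => g v p.1 i) p.2.1 :=
    (continuous_partial_gradient (f := fun v t => g v t i) (hg i)).comp hproj
  have hgcont (i : Fin m) : Continuous fun p : ℝ × EuclideanSpace ℝ (Fin n) × (Fin m → ℝ) =>
      g p.2.1 p.1 i :=
    (hg i).continuous.comp hproj
  refine .prodMk ?_ (continuous_pi fun i => ?_)
  · fun_prop
  · exact continuous_cubicPhi.comp (.prodMk (by fun_prop) (hgcont i).neg)

theorem homotopyMap_accumulation_point_is_KKT_general (hJ : ContDiff ℝ 1 J)
    (hg : ∀ i, ContDiff ℝ 1 (fun q : EuclideanSpace ℝ (Fin n) × ℝ => g q.1 q.2 i))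
    (hmem : (1, u, μ) ∈ closure {p : ℝ × EuclideanSpace ℝ (Fin n) × (Fin m → ℝ) |
      homotopyMap J g a p.1 p.2.1 p.2.2 = 0}) :
    IsKKTPair J (fun v => g v 1) u μ := by
  have hclosed : IsClosed {p : ℝ × EuclideanSpace ℝ (Fin n) × (Fin m → ℝ) |
      homotopyMap J g a p.1 p.2.1 p.2.2 = 0} :=
    isClosed_eq (continuous_homotopyMap hJ hg) continuous_const
  exact homotopyMap_one_eq_zero_iff.1 (hclosed.closure_subset hmem)

end HomotopyMap

/-- any accumulation point of the zero set of the homotopy as the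
parameter tends to `1` is a KKT pair of the original (`λ = 1`) problem
`min J(u)` subject to `g(u,1) ≤ 0`. -/
theorem homotopyMap_accumulation_point_is_KKT
    {n m : ℕ} (J : EuclideanSpace ℝ (Fin n) → ℝ)
    (g : EuclideanSpace ℝ (Fin n) → ℝ → Fin m → ℝ)
    (hJ : ContDiff ℝ 1 J)
    (hg : ∀ i, ContDiff ℝ 1 (fun q : EuclideanSpace ℝ (Fin n) × ℝ => g q.1 q.2 i))
    (a : EuclideanSpace ℝ (Fin n))
    (lam : ℕ → ℝ) (u : ℕ → EuclideanSpace ℝ (Fin n)) (μ : ℕ → Fin m → ℝ)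
    (hlam_mem : ∀ k, lam k ∈ Set.Icc (0 : ℝ) 1)
    (hzero : ∀ k, homotopyMap J g a (lam k) (u k) (μ k) = 0)
    (ustar : EuclideanSpace ℝ (Fin n)) (mustar : Fin m → ℝ)
    (hlam : Filter.Tendsto lam Filter.atTop (nhds 1))
    (hu : Filter.Tendsto u Filter.atTop (nhds ustar))
    (hmu : Filter.Tendsto μ Filter.atTop (nhds mustar)) :
    (gradient J ustar + ∑ i, mustar i • gradient (fun v => g v 1 i) ustar = 0) ∧
    (∀ i, g ustar 1 i ≤ 0) ∧ (∀ i, 0 ≤ mustar i) ∧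
    (∀ i, mustar i * g ustar 1 i = 0) := by
  obtain ⟨hstat, hfeas, hμ, hcompl⟩ := homotopyMap_accumulation_point_is_KKT_general hJ hg
    (mem_closure_of_tendsto (hlam.prodMk_nhds (hu.prodMk_nhds hmu)) (.of_forall hzero))
  exact ⟨hstat, hfeas, hμ, hcompl⟩
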